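/- For every integer n ≥ 3, the connected domination number of the flower snark J_n equals 2n if n is even, and equals 2n − 1 if n is odd. -/

import Mathlib

/-- Vertices of the flower snark `J_n`: a copy index `i : Fin n` together with
one of the four vertices of the copy: `0 = a`, `1 = b`, `2 = c`, `3 = d`. -/
abbrev FV (n : ℕ) := Fin n × Fin 4

/-- The flower snark `J_n`: in each copy, `a^i` is adjacent to `b^i, c^i, d^i`;
the `b` vertices form an `n`-cycle; the `c` and `d` vertices form a `2n`-cycle
via the paths `c^i c^{i+1}`, `d^i d^{i+1}` (for `1 ≤ i ≤ n-1`) together with the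
twist edges `c^n d^1` and `d^n c^1`. -/
def flowerSnark (n : ℕ) : SimpleGraph (FV n) :=
  SimpleGraph.fromRel (fun v w =>
    (v.1 = w.1 ∧ v.2 = 0 ∧ w.2 ≠ 0) ∨
    (((v.1 : ℕ) + 1) % n = (w.1 : ℕ) ∧ v.2 = 1 ∧ w.2 = 1) ∨
    ((v.1 : ℕ) + 1 = (w.1 : ℕ) ∧ v.2 = 2 ∧ w.2 = 2) ∨
    ((v.1 : ℕ) + 1 = (w.1 : ℕ) ∧ v.2 = 3 ∧ w.2 = 3) ∨
    ((v.1 : ℕ) = n - 1 ∧ (w.1 : ℕ) = 0 ∧ v.2 = 2 ∧ w.2 = 3) ∨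
    ((v.1 : ℕ) = n - 1 ∧ (w.1 : ℕ) = 0 ∧ v.2 = 3 ∧ w.2 = 2))

/-- `S` is a dominating set of `J_n`. -/
def Dominating (n : ℕ) (S : Set (FV n)) : Prop :=
  ∀ v ∉ S, ∃ w ∈ S, (flowerSnark n).Adj v w

/-- `S` is a minimal dominating set of `J_n`. -/
def MinimalDominating (n : ℕ) (S : Set (FV n)) : Prop :=
  Dominating n S ∧ ∀ T : Set (FV n), T ⊂ S → ¬ Dominating n T

/-- `S` is an independent set of `J_n`. -/
def IndependentSet (n : ℕ) (S : Set (FV n)) : Prop :=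
  ∀ v ∈ S, ∀ w ∈ S, ¬ (flowerSnark n).Adj v w

/-- `S` is a 2-dominating set of `J_n`: every vertex outside `S` has at least
two neighbours in `S`. -/
def TwoDominating (n : ℕ) (S : Set (FV n)) : Prop :=
  ∀ v ∉ S, ∃ w₁ ∈ S, ∃ w₂ ∈ S, w₁ ≠ w₂ ∧
    (flowerSnark n).Adj v w₁ ∧ (flowerSnark n).Adj v w₂

/-- `S` is a total dominating set of `J_n`. -/
def TotalDominating (n : ℕ) (S : Set (FV n)) : Prop :=
  ∀ v : FV n, ∃ w ∈ S, (flowerSnark n).Adj v w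

/-- `S` is a connected dominating set of `J_n`. -/
def ConnectedDominating (n : ℕ) (S : Set (FV n)) : Prop :=
  Dominating n S ∧ ((flowerSnark n).induce S).Connected

/-- `S` is a secure dominating set of `J_n`. -/
def SecureDominating (n : ℕ) (S : Set (FV n)) : Prop :=
  Dominating n S ∧ ∀ v ∉ S, ∃ w ∈ S,
    (flowerSnark n).Adj v w ∧ Dominating n (insert v (S \ {w}))

/-- `v` is undefended with respect to `f`: neither `v` nor any of its
neighbours carries a guard. -/
def Undefended (n : ℕ) (f : FV n → ℕ) (v : FV n) : Prop :=
  f v = 0 ∧ ∀ w, (flowerSnark n).Adj v w → f w = 0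

/-- `f` is a weak Roman dominating function on `J_n`: `f` takes values in
`{0,1,2}`, has no undefended vertex, and every vertex `v` with `f v = 0` has a
neighbour `w` with `f w ≥ 1` such that moving one guard from `w` to `v` leaves
no undefended vertex. -/
def WeakRomanDominating (n : ℕ) (f : FV n → ℕ) : Prop :=
  (∀ v, f v ≤ 2) ∧ (∀ v, ¬ Undefended n f v) ∧
  ∀ v, f v = 0 → ∃ w, (flowerSnark n).Adj v w ∧ 1 ≤ f w ∧
    ∀ u, ¬ Undefended n
      (fun x => if x = v then 1 else if x = w then f w - 1 else f x) u

/-- The domination number of `J_n`. -/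
noncomputable def dominationNumber (n : ℕ) : ℕ :=
  sInf {k | ∃ S : Set (FV n), Dominating n S ∧ S.ncard = k}

/-- The independent domination number of `J_n`. -/
noncomputable def indepDominationNumber (n : ℕ) : ℕ :=
  sInf {k | ∃ S : Set (FV n), Dominating n S ∧ IndependentSet n S ∧ S.ncard = k}

/-- The upper domination number of `J_n`: the maximum cardinality of a minimal
dominating set. -/
noncomputable def upperDominationNumber (n : ℕ) : ℕ :=
  sSup {k | ∃ S : Set (FV n), MinimalDominating n S ∧ S.ncard = k}

/-- The 2-domination number of `J_n`. -/
noncomputable def twoDominationNumber (n : ℕ) : ℕ :=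
  sInf {k | ∃ S : Set (FV n), TwoDominating n S ∧ S.ncard = k}

/-- The total domination number of `J_n`. -/
noncomputable def totalDominationNumber (n : ℕ) : ℕ :=
  sInf {k | ∃ S : Set (FV n), TotalDominating n S ∧ S.ncard = k}

/-- The connected domination number of `J_n`. -/
noncomputable def connectedDominationNumber (n : ℕ) : ℕ :=
  sInf {k | ∃ S : Set (FV n), ConnectedDominating n S ∧ S.ncard = k}

/-- The secure domination number of `J_n`. -/
noncomputable def secureDominationNumber (n : ℕ) : ℕ :=
  sInf {k | ∃ S : Set (FV n), SecureDominating n S ∧ S.ncard = k}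

/-- The weak Roman domination number of `J_n`. -/
noncomputable def weakRomanDominationNumber (n : ℕ) : ℕ :=
  sInf {k | ∃ f : FV n → ℕ, WeakRomanDominating n f ∧ ∑ v, f v = k}

/-- The weight of the copy `J^(m mod n)` in a vertex set `S`, i.e. the number
of vertices of `S` among `a, b, c, d` of that copy. -/
noncomputable def copyWeight {n : ℕ} (S : Set (FV n)) (m : ℕ) : ℕ :=
  (S ∩ {v : FV n | (v.1 : ℕ) = m % n}).ncard

/-- The weight of the copy `J^(m mod n)` in a function `f`, i.e.
`f a + f b + f c + f d` over that copy. -/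
def fCopyWeight {n : ℕ} (f : FV n → ℕ) (m : ℕ) : ℕ :=
  ∑ v ∈ Finset.univ.filter (fun v : FV n => (v.1 : ℕ) = m % n), f v

def sw (t : Fin 4) : Fin 4 := if t = 2 then 3 else if t = 3 then 2 else t

lemma sw_sw (t : Fin 4) : sw (sw t) = t := by revert t; decide
lemma sw_zero (t : Fin 4) : sw t = 0 ↔ t = 0 := by revert t; decide

/-- unrolled position -/
def pos (n : ℕ) (hn : 3 ≤ n) (m : ℕ) (t : Fin 4) : FV n :=
  if h : m < n then (⟨m, h⟩, t) else (⟨(m - n) % n, Nat.mod_lt _ (by omega)⟩, sw t)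

lemma adj_iff (n : ℕ) (i j : Fin n) (s t : Fin 4) :
    (flowerSnark n).Adj (i, s) (j, t) ↔
    (i, s) ≠ (j, t) ∧
    ((i = j ∧ s = 0 ∧ t ≠ 0) ∨ (i = j ∧ t = 0 ∧ s ≠ 0) ∨
    ((i : ℕ) + 1 = j ∧ s = t ∧ s ≠ 0) ∨ ((j : ℕ) + 1 = i ∧ s = t ∧ s ≠ 0) ∨
    ((i : ℕ) = n - 1 ∧ (j : ℕ) = 0 ∧ t = sw s ∧ s ≠ 0) ∨
    ((j : ℕ) = n - 1 ∧ (i : ℕ) = 0 ∧ t = sw s ∧ s ≠ 0)) := by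
  have hi := i.2
  have hj := j.2
  have h1 : ((i : ℕ) + 1) % n = j ↔ ((i : ℕ) + 1 = j ∨ ((i : ℕ) = n - 1 ∧ (j : ℕ) = 0)) := by
    rcases Nat.lt_or_ge ((i : ℕ) + 1) n with h | h
    · rw [Nat.mod_eq_of_lt h]; omega
    · have : (i : ℕ) + 1 = n := by omega
      rw [this, Nat.mod_self]; omega
  have h2 : ((j : ℕ) + 1) % n = i ↔ ((j : ℕ) + 1 = i ∨ ((j : ℕ) = n - 1 ∧ (i : ℕ) = 0)) := by
    rcases Nat.lt_or_ge ((j : ℕ) + 1) n with h | h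
    · rw [Nat.mod_eq_of_lt h]; omega
    · have : (j : ℕ) + 1 = n := by omega
      rw [this, Nat.mod_self]; omega
  simp only [flowerSnark, SimpleGraph.fromRel_adj, h1, h2, eq_comm (a := j) (b := i)]
  generalize (i = j) = P
  generalize ((i : ℕ) + 1 = j) = P1
  generalize ((j : ℕ) + 1 = i) = P2
  generalize ((i : ℕ) = n - 1) = P3
  generalize ((j : ℕ) = n - 1) = P4
  generalize ((i : ℕ) = 0) = P5
  generalize ((j : ℕ) = 0) = P6
  refine and_congr_right fun _ => ?_
  fin_cases s <;> fin_cases t <;> simp [sw] <;> grind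

lemma adj_pos (n : ℕ) (hn : 3 ≤ n) (m : ℕ) (h1 : 1 ≤ m) (h2 : m ≤ n) (t : Fin 4) (ht : t ≠ 0)
    (w : FV n) : (flowerSnark n).Adj (pos n hn m t) w ↔
      w = pos n hn m 0 ∨ w = pos n hn (m-1) t ∨ w = pos n hn (m+1) t := by
  obtain ⟨j, s⟩ := w
  have hj := j.2
  have e1 : (n + 1 - n) % n = 1 := by
    rw [show n + 1 - n = 1 by omega]; exact Nat.mod_eq_of_lt (by omega)
  have hs0 : sw 0 = 0 := rfl
  have ht' : sw t ≠ 0 := by rwa [Ne, sw_zero]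
  have hst : sw (sw t) = t := sw_sw t
  rcases Nat.lt_or_ge m n with h | h
  · have h3 : m - 1 < n := by omega
    rcases Nat.lt_or_ge (m+1) n with h4 | h4
    · simp only [pos, h, h3, h4, dif_pos, adj_iff, Prod.mk.injEq, Fin.ext_iff]
      grind
    · have h5 : m + 1 = n := by omega
      have h6 : (m + 1 - n) % n = 0 := by rw [h5]; simp
      have h4' : ¬ (m + 1 < n) := by omega
      simp only [pos, h, h3, h4', dif_pos, dif_neg, not_false_iff, adj_iff, Prod.mk.injEq, Fin.ext_iff, h6]
      grind
  · have h5 : m = n := by omega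
    subst h5
    have h3 : m - 1 < m := by omega
    have h4 : ¬ (m < m) := by omega
    have h4' : ¬ (m + 1 < m) := by omega
    simp only [pos, h3, h4', h4, dif_pos, dif_neg, not_false_iff, adj_iff, Prod.mk.injEq, Fin.ext_iff, e1,
      Nat.sub_self, Nat.zero_mod]
    grind

lemma adj_pos0 (n : ℕ) (hn : 3 ≤ n) (m : ℕ)
    (w : FV n) : (flowerSnark n).Adj (pos n hn m 0) w ↔
      w = pos n hn m 1 ∨ w = pos n hn m 2 ∨ w = pos n hn m 3 := by
  obtain ⟨j, s⟩ := w
  rcases Nat.lt_or_ge m n with h | h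
  · simp only [pos, h, dif_pos, adj_iff, Prod.mk.injEq, Fin.ext_iff]
    fin_cases s <;> simp <;> grind
  · have h4 : ¬ (m < n) := by omega
    simp only [pos, h4, dif_neg, not_false_iff, adj_iff, Prod.mk.injEq, Fin.ext_iff]
    fin_cases s <;> simp [sw] <;> grind

lemma pos_inj0 (n : ℕ) (hn : 3 ≤ n) (m : ℕ) (s t : Fin 4) (h : pos n hn m s = pos n hn m t) :
    s = t := by
  unfold pos at h
  split_ifs at h
  · simpa using h
  · have : sw s = sw t := by simpa using h
    rw [← sw_sw s, this, sw_sw]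

lemma pos_ne (n : ℕ) (hn : 3 ≤ n) (m : ℕ) (h1 : 1 ≤ m) (h2 : m ≤ n) (s t : Fin 4) :
    pos n hn m s ≠ pos n hn (m-1) t ∧ pos n hn m s ≠ pos n hn (m+1) t ∧
    pos n hn (m-1) s ≠ pos n hn (m+1) t := by
  have key : ∀ k, k ≤ n + 1 → ((pos n hn k s).1 : ℕ) = (if k < n then k else k - n) ∧
     ((pos n hn k t).1 : ℕ) = (if k < n then k else k - n) := by
    intro k hk
    unfold pos
    split_ifs with h
    · simp
    · simp only [and_self]; exact Nat.mod_eq_of_lt (by omega)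
  have k1 := key m (by omega)
  have k2 := key (m-1) (by omega)
  have k3 := key (m+1) (by omega)
  refine ⟨fun h => ?_, fun h => ?_, fun h => ?_⟩ <;>
  · have := congrArg (fun v : FV n => (v.1 : ℕ)) h
    simp only [k1, k2, k3] at this
    split_ifs at this <;> omega

lemma pos_surj (n : ℕ) (hn : 3 ≤ n) (v : FV n) : ∃ m t, 1 ≤ m ∧ m ≤ n ∧ v = pos n hn m t := by
  obtain ⟨i, s⟩ := v
  rcases Nat.eq_zero_or_pos (i : ℕ) with h | h
  · refine ⟨n, sw s, by omega, le_rfl, ?_⟩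
    simp [pos, sw_sw, Fin.ext_iff, h]
  · exact ⟨i, s, h, i.2.le, by simp [pos]⟩

lemma conn_of_rank {V : Type*} (G : SimpleGraph V) (S : Set V) (r : V) (hr : r ∈ S) (f : V → ℕ)
    (h : ∀ v ∈ S, v ≠ r → ∃ w ∈ S, G.Adj v w ∧ f w < f v) : (G.induce S).Connected := by
  have key : ∀ k, ∀ v (hv : v ∈ S), f v ≤ k → (G.induce S).Reachable ⟨v, hv⟩ ⟨r, hr⟩ := by
    intro k
    induction k with
    | zero =>
      intro v hv hk
      by_cases e : v = r
      · subst e; exact SimpleGraph.Reachable.refl _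
      · obtain ⟨w, _, _, h3⟩ := h v hv e
        omega
    | succ k ih =>
      intro v hv hk
      by_cases e : v = r
      · subst e; exact SimpleGraph.Reachable.refl _
      · obtain ⟨w, hw, h2, h3⟩ := h v hv e
        refine SimpleGraph.Reachable.trans (SimpleGraph.Adj.reachable ?_) (ih w hw (by omega))
        exact h2
  refine SimpleGraph.connected_iff_exists_forall_reachable _ |>.2 ⟨⟨r, hr⟩, fun v => ?_⟩
  exact (key _ v.1 v.2 le_rfl).symm

lemma upper_even' (n : ℕ) (hn : 3 ≤ n) :
    ∃ S : Set (FV n), ConnectedDominating n S ∧ S.ncard ≤ 2 * n := by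
  let S : Set (FV n) := {v | v.2 = 0 ∨ v.2 = 1}
  have hS : ConnectedDominating n S := by
    constructor
    · rintro ⟨i, s⟩ hv
      refine ⟨(i, 0), Or.inl rfl, ?_⟩
      rw [adj_iff]
      simp only [S, Set.mem_ofPred_eq, not_or] at hv
      simp [hv.1]
    · refine conn_of_rank _ S (⟨0, by omega⟩, 1) (Or.inr rfl)
        (fun v => 2 * (v.1 : ℕ) + (if v.2 = 0 then 1 else 0)) ?_
      rintro ⟨i, s⟩ hv hne
      rcases hv with hv | hv
      · simp only at hv
        subst hv
        refine ⟨(i, 1), Or.inr rfl, ?_, by simp⟩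
        rw [adj_iff]; simp
      · simp only at hv
        subst hv
        have hi : (i : ℕ) ≠ 0 := by
          intro h; exact hne (by ext <;> simp [h])
        refine ⟨(⟨i - 1, by omega⟩, 1), Or.inr rfl, ?_, ?_⟩
        · rw [adj_iff]; simp [Fin.ext_iff]; omega
        · simp; omega
  have hc : S.ncard ≤ 2 * n := by
    have := Set.ncard_le_ncard_of_injOn (s := S) (t := (Finset.range (2*n) : Set ℕ))
      (fun v => 2 * (v.1 : ℕ) + (v.2 : ℕ)) ?_ ?_ (Finset.finite_toSet _)
    · rwa [Set.ncard_coe_finset, Finset.card_range] at this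
    · rintro ⟨i, s⟩ hv
      have := i.2
      rcases hv with hv | hv <;> simp only at hv <;> subst hv <;> simp <;> omega
    · rintro ⟨i, s⟩ hv ⟨j, t⟩ hw h
      rcases hv with hv | hv <;> simp only at hv <;> subst hv <;>
      rcases hw with hw | hw <;> simp only at hw <;> subst hw <;> simp [Fin.ext_iff] at h ⊢ <;> omega
  exact ⟨S, hS, hc⟩

lemma upper_even (n : ℕ) (hn : 3 ≤ n) : connectedDominationNumber n ≤ 2 * n := by
  obtain ⟨S, hS, hc⟩ := upper_even' n hn
  refine le_trans (Nat.sInf_le ?_) hc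
  exact ⟨S, hS, rfl⟩

def oddS (n : ℕ) : Set (FV n) := {v |
  ((v.1 : ℕ) ≠ 0 ∧ v.2 = 2) ∨ ((v.1 : ℕ) = 0 ∧ n % 4 = 3 ∧ v.2 = 2) ∨
  ((v.1 : ℕ) = 0 ∧ n % 4 = 1 ∧ v.2 = 1) ∨ ((v.1 : ℕ) % 2 = 1 ∧ v.2 = 0) ∨
  ((v.1 : ℕ) % 4 = 1 ∧ v.2 = 1) ∨ ((v.1 : ℕ) % 4 = 3 ∧ v.2 = 3)}

lemma upper_odd (n : ℕ) (hn : 3 ≤ n) (ho : Odd n) : connectedDominationNumber n ≤ 2 * n - 1 := by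
  have ho' : n % 2 = 1 := Nat.odd_iff.1 ho
  have ho4 : n % 4 = 1 ∨ n % 4 = 3 := by omega
  have hS : ConnectedDominating n (oddS n) := by
    constructor
    · have mk : ∀ (i : Fin n) (s : Fin 4) (j : ℕ) (t : Fin 4) (hj : j < n),
        ((⟨j, hj⟩, t) : FV n) ∈ oddS n → (flowerSnark n).Adj (i, s) (⟨j, hj⟩, t) →
        ∃ w ∈ oddS n, (flowerSnark n).Adj (i, s) w := fun i s j t hj h1 h2 => ⟨_, h1, h2⟩
      rintro ⟨i, s⟩ hv
      have hi := i.2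
      rcases Nat.mod_two_eq_zero_or_one (i : ℕ) with h | h
      · -- even copy
        fin_cases s
        · by_cases h0 : (i : ℕ) = 0 ∧ n % 4 = 1
          · apply mk i _ i 1 hi
            · simp [oddS]; omega
            · simp [adj_iff]
          · apply mk i _ i 2 hi
            · simp [oddS]; omega
            · simp [adj_iff]
        · simp [oddS] at hv
          by_cases h0 : (i : ℕ) % 4 = 0
          · by_cases h1 : (i : ℕ) = n - 1
            · apply mk i _ 0 1 (by omega)
              · simp [oddS]; omega
              · simp [adj_iff, Fin.ext_iff, sw]; omega
            · apply mk i _ (i+1) 1 (by omega)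
              · simp [oddS]; omega
              · simp [adj_iff, Fin.ext_iff, sw]
          · apply mk i _ (i-1) 1 (by omega)
            · simp [oddS]; omega
            · simp [adj_iff, Fin.ext_iff, sw]; omega
        · simp [oddS] at hv
          apply mk i _ 1 2 (by omega)
          · simp [oddS]
          · simp [adj_iff, Fin.ext_iff, sw]; omega
        · by_cases h0 : (i : ℕ) = 0
          · apply mk i _ (n-1) 2 (by omega)
            · simp [oddS]; omega
            · simp [adj_iff, Fin.ext_iff, sw]; omega
          · by_cases h1 : (i : ℕ) % 4 = 0
            · apply mk i _ (i-1) 3 (by omega)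
              · simp [oddS]; omega
              · simp [adj_iff, Fin.ext_iff, sw]; omega
            · by_cases h2 : (i : ℕ) = n - 1
              · apply mk i _ 0 2 (by omega)
                · simp [oddS]; omega
                · simp [adj_iff, Fin.ext_iff, sw]; omega
              · apply mk i _ (i+1) 3 (by omega)
                · simp [oddS]; omega
                · simp [adj_iff, Fin.ext_iff, sw]
      · have hs : s ≠ 0 := by
          rintro rfl
          exact hv (by simp [oddS, h])
        apply mk i _ i 0 hi
        · simp [oddS, h]
        · simp [adj_iff, hs]
  -- connectivity
    · refine conn_of_rank _ (oddS n) (⟨1, by omega⟩, 2) (by simp [oddS])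
        (fun v => if (v.1 : ℕ) = 0 then 7 else 4 * (v.1 : ℕ) +
          (if v.2 = 2 then 0 else if v.2 = 0 then 1 else 2)) ?_
      have mk : ∀ (f : FV n → ℕ) (v : FV n) (j : ℕ) (t : Fin 4) (hj : j < n),
        ((⟨j, hj⟩, t) : FV n) ∈ oddS n → (flowerSnark n).Adj v (⟨j, hj⟩, t) →
        f (⟨j, hj⟩, t) < f v →
        ∃ w ∈ oddS n, (flowerSnark n).Adj v w ∧ f w < f v := fun f v j t hj h1 h2 h3 => ⟨_, h1, h2, h3⟩
      rintro ⟨i, s⟩ hv hne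
      have hi := i.2
      by_cases h0 : (i : ℕ) = 0
      · simp only [oddS, Set.mem_ofPred_eq, h0] at hv
        have hs : s = 1 ∨ s = 2 := by
          rcases hv with hv | hv | hv | hv | hv | hv <;> simp at hv <;> tauto
        apply mk _ _ 1 s (by omega)
        · rcases hs with rfl | rfl <;> simp [oddS]
        · rcases hs with rfl | rfl <;> simp [adj_iff, Fin.ext_iff, sw, h0]
        · rcases hs with rfl | rfl <;> simp [h0]
      · fin_cases s
        · apply mk _ _ i 2 hi
          · simp [oddS]; omega
          · simp [adj_iff]
          · simp [h0]
        · simp [oddS] at hv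
          apply mk _ _ i 0 hi
          · simp [oddS]; omega
          · simp [adj_iff]
          · simp [h0]
        · simp [Fin.ext_iff] at hne
          apply mk _ _ (i-1) 2 (by omega)
          · simp [oddS]; omega
          · simp [adj_iff, Fin.ext_iff]; omega
          · simp only [h0, if_false]
            rw [if_neg (by omega)]
            simp; omega
        · simp [oddS] at hv
          apply mk _ _ i 0 hi
          · simp [oddS]; omega
          · simp [adj_iff]
          · simp [h0]
  have hc : (oddS n).ncard ≤ 2 * n - 1 := by
    have := Set.ncard_le_ncard_of_injOn (s := oddS n) (t := (Finset.range (2*n-1) : Set ℕ))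
      (fun v => if (v.1 : ℕ) % 2 = 0 then 2 * (v.1 : ℕ) else
        if v.2 = 0 then 2 * (v.1 : ℕ) - 1 else if v.2 = 2 then 2 * (v.1 : ℕ) else 2 * (v.1 : ℕ) + 1)
         ?_ ?_ (Finset.finite_toSet _)
    · rwa [Set.ncard_coe_finset, Finset.card_range] at this
    · rintro ⟨i, s⟩ hv
      have := i.2
      simp only [Finset.coe_range, Set.mem_Iio]
      split_ifs <;> omega
    · rintro ⟨i, s⟩ hv ⟨j, t⟩ hw h
      simp only [oddS, Set.mem_ofPred_eq] at hv hw
      simp only [Prod.mk.injEq, Fin.ext_iff (a := i) (b := j)]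
      fin_cases s <;> fin_cases t <;> simp [Fin.ext_iff] at hv hw h ⊢ <;> (try split_ifs at h) <;> omega
  refine le_trans (Nat.sInf_le ?_) hc
  exact ⟨_, hS, rfl⟩

lemma deg_le (n : ℕ) (hn : 3 ≤ n) (v : FV n) :
    ∃ x y z, ∀ w, (flowerSnark n).Adj v w → w = x ∨ w = y ∨ w = z := by
  obtain ⟨m, t, h1, h2, rfl⟩ := pos_surj n hn v
  by_cases ht : t = 0
  · subst ht
    exact ⟨_, _, _, fun w => (adj_pos0 n hn m w).1⟩
  · exact ⟨_, _, _, fun w => (adj_pos n hn m h1 h2 t ht w).1⟩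

open Classical in
lemma counting {V : Type*} [Fintype V] (G : SimpleGraph V) (S : Finset V)
    (hdeg : ∀ v, ∃ x y z, ∀ w, G.Adj v w → w = x ∨ w = y ∨ w = z)
    (hc : (G.induce (S : Set V)).Connected) :
    ∑ v ∈ Sᶜ, (S.filter (fun w => G.Adj v w)).card ≤ S.card + 2 := by
  have h1 := hc.card_vert_le_card_edgeSet_add_one
  have h2 := (G.induce (S : Set V)).sum_degrees_eq_twice_card_edges
  have h3 : ∀ v : (S : Set V), (G.induce (S : Set V)).degree v
      = (S.filter (fun w => G.Adj v w)).card := by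
    intro v
    rw [← SimpleGraph.card_neighborFinset_eq_degree, ← Finset.card_map (.subtype (· ∈ (S : Set V)))]
    congr 1
    ext w
    simp [and_comm]
  have h4 : ∑ v : (S : Set V), (G.induce (S : Set V)).degree v
      = ∑ v ∈ S, (S.filter (fun w => G.Adj v w)).card := by
    rw [Finset.sum_congr rfl (fun v _ => h3 v)]
    exact Finset.sum_coe_sort S (fun v => (S.filter (fun w => G.Adj v w)).card)
  have h5 : ∑ v ∈ Sᶜ, (S.filter (fun w => G.Adj v w)).card
      = ∑ v ∈ S, (Sᶜ.filter (fun w => G.Adj v w)).card := by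
    have := Finset.sum_card_bipartiteAbove_eq_sum_card_bipartiteBelow (s := Sᶜ) (t := S) G.Adj
    simp only [Finset.bipartiteAbove, Finset.bipartiteBelow] at this
    rw [this]
    simp only [G.adj_comm]
  have h6 : ∀ v ∈ S, (S.filter (fun w => G.Adj v w)).card + (Sᶜ.filter (fun w => G.Adj v w)).card
      ≤ 3 := by
    intro v _
    rw [← Finset.card_union_of_disjoint, ← Finset.filter_union, Finset.union_compl]
    · obtain ⟨x, y, z, h⟩ := hdeg v
      refine le_trans (Finset.card_le_card (t := {x, y, z}) ?_) Finset.card_le_three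
      intro w hw
      simpa using h w (by simpa using hw)
    · exact Finset.disjoint_filter_filter (disjoint_compl_right)
  have h7 := Finset.sum_le_sum h6
  rw [Finset.sum_add_distrib] at h7
  simp only [Finset.sum_const, smul_eq_mul] at h7
  have h8 : Nat.card (S : Set V) = S.card := by simp
  have h9 : Nat.card (G.induce (S : Set V)).edgeSet = (G.induce (S : Set V)).edgeFinset.card := by
    rw [Nat.card_eq_fintype_card, SimpleGraph.edgeFinset_card]
  omega

open Classical in
lemma lower (n : ℕ) (hn : 3 ≤ n) (S : Finset (FV n)) (h : ConnectedDominating n S) :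
    2 * n - 1 ≤ S.card ∧ (S.card = 2 * n - 1 → ∀ v ∉ S, ∀ w ∈ S, ∀ w' ∈ S,
      (flowerSnark n).Adj v w → (flowerSnark n).Adj v w' → w = w') := by
  have h1 : ∑ v ∈ Sᶜ, (S.filter (fun w => (flowerSnark n).Adj v w)).card ≤ S.card + 2 := by
    convert counting (flowerSnark n) S (deg_le n hn) h.2
  have h2 : ∀ v ∈ Sᶜ, 1 ≤ (S.filter (fun w => (flowerSnark n).Adj v w)).card := by
    intro v hv
    obtain ⟨w, hw, ha⟩ := h.1 v (by simpa using hv)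
    exact Finset.card_pos.2 ⟨w, by simpa using ⟨hw, ha⟩⟩
  have h3 := Finset.sum_le_sum h2
  simp only [Finset.sum_const, smul_eq_mul, mul_one] at h3
  have h4 : Sᶜ.card + S.card = n * 4 := by
    rw [add_comm, Finset.card_add_card_compl]; simp
  refine ⟨by omega, ?_⟩
  intro hk v hv w hw w' hw' ha ha'
  by_contra hne
  have hlt : ∑ v ∈ Sᶜ, 1 < ∑ v ∈ Sᶜ, (S.filter (fun w => (flowerSnark n).Adj v w)).card := by
    refine Finset.sum_lt_sum h2 ⟨v, by simpa using hv, ?_⟩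
    exact Finset.one_lt_card.2 ⟨w, by simp [hw, ha], w', by simp [hw', ha'], hne⟩
  simp only [Finset.sum_const, smul_eq_mul, mul_one] at hlt
  omega

/-- exactly one false -/
def ex1 (x y z : Bool) : Bool := (!x && y && z) || (x && !y && z) || (x && y && !z)

lemma ex1_of (x y z : Bool) (h : x = false ∨ y = false ∨ z = false)
    (h1 : ¬ (x = false ∧ y = false)) (h2 : ¬ (x = false ∧ z = false))
    (h3 : ¬ (y = false ∧ z = false)) : ex1 x y z = true := by
  revert x y z; decide

set_option maxRecDepth 100000 in
lemma local_parity : ∀ a b c d b' c' d' b'' c'' d'' : Bool,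
    (a → ex1 b c d) → (b → ex1 a b' b'') → (c → ex1 a c' c'') → (d → ex1 a d' d'') →
    (a || !b || !c || !d) →
    let e := (b && b').toNat + (c && c').toNat + (d && d').toNat
    let e' := (b && b'').toNat + (c && c'').toNat + (d && d'').toNat
    let w := a.toNat + b.toNat + c.toNat + d.toNat
    (e % 2 = 1 ∧ e' % 2 = 1 ∧ w % 2 = 1) ∨
    (e % 2 = 0 ∧ e' % 2 = 0 ∧ w % 2 = (e / 2 + e' / 2) % 2) := by
  decide

lemma global_parity (w e : ℕ → ℕ) (n : ℕ)
    (h : ∀ m, m < n → (e m % 2 = 1 ∧ e (m+1) % 2 = 1 ∧ w (m+1) % 2 = 1) ∨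
    (e m % 2 = 0 ∧ e (m+1) % 2 = 0 ∧ w (m+1) % 2 = (e m / 2 + e (m+1) / 2) % 2)) :
    (e 0 % 2 = 1 ∧ e n % 2 = 1 ∧ (∑ m ∈ Finset.range n, w (m+1)) % 2 = n % 2) ∨
    (e 0 % 2 = 0 ∧ e n % 2 = 0 ∧ (∑ m ∈ Finset.range n, w (m+1)) % 2 = (e 0 / 2 + e n / 2) % 2) := by
  induction n with
  | zero => simp; omega
  | succ k ih =>
    have h1 := ih (fun m hm => h m (by omega))
    have h2 := h k (by omega)
    rw [Finset.sum_range_succ]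
    omega

lemma no_small (n : ℕ) (hn : 3 ≤ n) (he : Even n) (S : Finset (FV n))
    (h : ConnectedDominating n S) (hk : S.card = 2 * n - 1) : False := by
  classical
  have huniq := (lower n hn S h).2 hk
  let p : ℕ → Fin 4 → Bool := fun m t => decide (pos n hn m t ∉ S)
  have hp : ∀ m t, p m t = false ↔ pos n hn m t ∈ S := by intro m t; simp [p]
  have hp' : ∀ m t, p m t = true ↔ pos n hn m t ∉ S := by intro m t; simp [p]
  let w : ℕ → ℕ := fun m => (p m 0).toNat + (p m 1).toNat + (p m 2).toNat + (p m 3).toNat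
  let e : ℕ → ℕ := fun m => (p (m+1) 1 && p m 1).toNat + (p (m+1) 2 && p m 2).toNat
    + (p (m+1) 3 && p m 3).toNat
  -- leaves
  have hleaf : ∀ m t, 1 ≤ m → m ≤ n → t ≠ 0 → p m t = true →
      ex1 (p m 0) (p (m-1) t) (p (m+1) t) = true := by
    intro m t h1 h2 ht hpt
    rw [hp'] at hpt
    have hA := adj_pos n hn m h1 h2 t ht
    have hd := huniq _ hpt
    obtain ⟨n1, n2, -⟩ := pos_ne n hn m h1 h2 0 t
    obtain ⟨-, -, n3⟩ := pos_ne n hn m h1 h2 t t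
    apply ex1_of <;> simp only [hp]
    · obtain ⟨x, hx, hax⟩ := h.1 _ hpt
      rcases (hA x).1 hax with rfl | rfl | rfl
      · exact Or.inl hx
      · exact Or.inr (Or.inl hx)
      · exact Or.inr (Or.inr hx)
    · rintro ⟨k1, k2⟩
      exact n1 (hd _ k1 _ k2 ((hA _).2 (by simp)) ((hA _).2 (by simp)))
    · rintro ⟨k1, k2⟩
      exact n2 (hd _ k1 _ k2 ((hA _).2 (by simp)) ((hA _).2 (by simp)))
    · rintro ⟨k1, k2⟩
      exact n3 (hd _ k1 _ k2 ((hA _).2 (by simp)) ((hA _).2 (by simp)))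
  have hroot : ∀ m, p m 0 = true → ex1 (p m 1) (p m 2) (p m 3) = true := by
    intro m hpt
    rw [hp'] at hpt
    have hA := adj_pos0 n hn m
    have hd := huniq _ hpt
    have hi := pos_inj0 n hn m
    apply ex1_of <;> simp only [hp]
    · obtain ⟨x, hx, hax⟩ := h.1 _ hpt
      rcases (hA x).1 hax with rfl | rfl | rfl
      · exact Or.inl hx
      · exact Or.inr (Or.inl hx)
      · exact Or.inr (Or.inr hx)
    · rintro ⟨k1, k2⟩
      exact absurd (hi _ _ (hd _ k1 _ k2 ((hA _).2 (by simp)) ((hA _).2 (by simp)))) (by decide)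
    · rintro ⟨k1, k2⟩
      exact absurd (hi _ _ (hd _ k1 _ k2 ((hA _).2 (by simp)) ((hA _).2 (by simp)))) (by decide)
    · rintro ⟨k1, k2⟩
      exact absurd (hi _ _ (hd _ k1 _ k2 ((hA _).2 (by simp)) ((hA _).2 (by simp)))) (by decide)
  have hiso : ∀ m, (p m 0 || !p m 1 || !p m 2 || !p m 3) = true := by
    intro m
    by_contra hcon
    simp only [Bool.not_eq_true, Bool.or_eq_false_iff, Bool.not_eq_false', hp, hp'] at hcon
    obtain ⟨⟨⟨k0, k1⟩, k2⟩, k3⟩ := hcon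
    obtain ⟨y, hy, hne⟩ := Finset.exists_mem_ne (by omega : 1 < S.card) (pos n hn m 0)
    have : Nontrivial ((S : Set (FV n)) : Type) := ⟨⟨⟨y, hy⟩, ⟨_, k0⟩, by simpa using hne⟩⟩
    obtain ⟨⟨x, hx⟩, hax⟩ := h.2.preconnected.exists_adj_of_nontrivial ⟨_, k0⟩
    have hax' : (flowerSnark n).Adj (pos n hn m 0) x := hax
    rcases (adj_pos0 n hn m x).1 hax' with rfl | rfl | rfl
    · exact k1 hx
    · exact k2 hx
    · exact k3 hx
  have hloc : ∀ m, m < n → (e m % 2 = 1 ∧ e (m+1) % 2 = 1 ∧ w (m+1) % 2 = 1) ∨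
    (e m % 2 = 0 ∧ e (m+1) % 2 = 0 ∧ w (m+1) % 2 = (e m / 2 + e (m+1) / 2) % 2) := by
    intro m hm
    have := local_parity (p (m+1) 0) (p (m+1) 1) (p (m+1) 2) (p (m+1) 3)
      (p m 1) (p m 2) (p m 3) (p (m+2) 1) (p (m+2) 2) (p (m+2) 3) (hroot _)
      (hleaf (m+1) 1 (by omega) (by omega) (by decide))
      (hleaf (m+1) 2 (by omega) (by omega) (by decide))
      (hleaf (m+1) 3 (by omega) (by omega) (by decide)) (hiso _)
    have e2 : e (m+1) = (p (m+1) 1 && p (m+2) 1).toNat + (p (m+1) 2 && p (m+2) 2).toNat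
      + (p (m+1) 3 && p (m+2) 3).toNat := by
      simp only [e, Bool.and_comm]
    rw [e2]
    exact this
  have hg := global_parity w e n hloc
  have hper : ∀ m t, m < 2 → p (n + m) t = p m (sw t) := by
    intro m t hm
    have : pos n hn (n+m) t = pos n hn m (sw t) := by
      have h1 : ¬ (n + m < n) := by omega
      have h2 : m < n := by omega
      simp only [pos, h1, h2, dif_pos, dif_neg, not_false_iff, Nat.add_sub_cancel_left,
        Nat.mod_eq_of_lt h2]
    simp only [p, this]
  have hen : e n = e 0 := by
    have p0 := fun t => hper 0 t (by omega)
    have p1 := fun t => hper 1 t (by omega)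
    simp only [add_zero] at p0
    simp only [e, p0, p1, zero_add]
    have : sw 1 = 1 ∧ sw 2 = 3 ∧ sw 3 = 2 := by decide
    rw [this.1, this.2.1, this.2.2]
    omega
  have hwn : w n = w 0 := by
    have p0 := fun t => hper 0 t (by omega)
    simp only [add_zero] at p0
    simp only [w, p0]
    have : sw 0 = 0 ∧ sw 1 = 1 ∧ sw 2 = 3 ∧ sw 3 = 2 := by decide
    rw [this.1, this.2.1, this.2.2.1, this.2.2.2]
    omega
  have hsum : ∑ m ∈ Finset.range n, w (m+1) = ∑ m ∈ Finset.range n, w m := by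
    have a1 := Finset.sum_range_succ w n
    have a2 := Finset.sum_range_succ' w n
    omega
  have hcard : ∑ m ∈ Finset.range n, w m = Sᶜ.card := by
    have h1 : Sᶜ.card = ∑ v : FV n, (decide (v ∉ S)).toNat := by
      rw [show Sᶜ = Finset.univ.filter (fun v => v ∉ S) by ext; simp, Finset.card_filter]
      refine Finset.sum_congr rfl fun v _ => ?_
      by_cases hv : v ∈ S <;> simp [hv]
    rw [h1, Fintype.sum_prod_type, ← Fin.sum_univ_eq_sum_range]
    refine Finset.sum_congr rfl fun i _ => ?_
    simp [Fin.sum_univ_four, w, p, pos]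
  have h4 : Sᶜ.card + S.card = n * 4 := by
    rw [add_comm, Finset.card_add_card_compl]; simp
  have := Nat.even_iff.1 he
  omega

lemma lower_set (n : ℕ) (hn : 3 ≤ n) (k : ℕ)
    (h : ∀ S : Finset (FV n), ConnectedDominating n S → k ≤ S.card) :
    k ≤ connectedDominationNumber n := by
  classical
  have hne : {k | ∃ S : Set (FV n), ConnectedDominating n S ∧ S.ncard = k}.Nonempty := by
    obtain ⟨S, hS, -⟩ := upper_even' n hn
    exact ⟨_, S, hS, rfl⟩
  obtain ⟨S, hS, hc⟩ := Nat.sInf_mem hne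
  unfold connectedDominationNumber
  rw [← hc, Set.ncard_eq_toFinset_card']
  exact h _ (by simpa using hS)

theorem flowerSnark_connectedDomination (n : ℕ) (hn : 3 ≤ n) :
    (Even n → connectedDominationNumber n = 2 * n) ∧
    (Odd n → connectedDominationNumber n = 2 * n - 1) := by
  constructor
  · intro he
    refine le_antisymm (upper_even n hn) (lower_set n hn _ fun S hS => ?_)
    have h1 := (lower n hn S hS).1
    have h2 := no_small n hn he S hS
    by_contra hlt
    exact h2 (by omega)
  · intro ho
    exact le_antisymm (upper_odd n hn ho) (lower_set n hn _ fun S hS => (lower n hn S hS).1)
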